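/- Let n be a positive integer and let X be the number of ones among n independent uniformly random bits (so X is Binomial(n, 1/2)-distributed, with expectation n/2). Then for every real t with 0 ≤ t ≤ √n/8, the probability that X − n/2 ≥ t·√n is at least e^{−4(t+1)²}/√(2π). -/

import Mathlib

open MeasureTheory
open scoped ENNReal

/-- The distribution of `n` independent uniformly random bits. -/
noncomputable def uniformBits (n : ℕ) : Measure (Fin n → Bool) :=
  Measure.pi fun _ => (PMF.bernoulli (1 / 2) (by norm_num)).toMeasure

/-- The number of ones among the bits `ω`. -/
def onesCount {n : ℕ} (ω : Fin n → Bool) : ℕ :=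
  (Finset.univ.filter fun i => ω i = true).card

lemma uniformBits_singleton (n : ℕ) (ω : Fin n → Bool) :
    uniformBits n {ω} = ENNReal.ofReal ((1 / 2) ^ n) := by
  have h (b : Bool) :
      (PMF.bernoulli (1 / 2) (by norm_num)).toMeasure {b} = ENNReal.ofReal (1 / 2) := by
    rw [PMF.toMeasure_apply_singleton _ _ (measurableSet_singleton b)]
    cases b <;> simp [PMF.bernoulli_apply]
  rw [uniformBits, Measure.pi_singleton]
  simp only [h, Finset.prod_const, Finset.card_univ, Fintype.card_fin]
  rw [ENNReal.ofReal_pow (by norm_num)]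

lemma card_onesCount_eq (n k : ℕ) :
    (Finset.univ.filter fun ω : Fin n → Bool => onesCount ω = k).card = n.choose k := by
  trans (Finset.powersetCard k (Finset.univ : Finset (Fin n))).card
  swap
  · rw [Finset.card_powersetCard, Finset.card_fin]
  refine Finset.card_bij' (fun ω _ => Finset.univ.filter fun i => ω i = true)
    (fun s _ i => decide (i ∈ s)) ?_ ?_ ?_ ?_
  · intro ω hω
    exact Finset.mem_powersetCard.mpr ⟨Finset.subset_univ _, (Finset.mem_filter.mp hω).2⟩
  · intro s hs
    rw [Finset.mem_filter]
    simpa [onesCount] using hs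
  · intro ω _
    ext i
    simp
  · intro s _
    ext i
    simp

/-- A set of ones counts contributes at least its total binomial weight. -/
lemma sum_choose_le_uniformBits (n : ℕ) (s : Finset ℕ) (A : Set (Fin n → Bool))
    (hA : ∀ ω, onesCount ω ∈ s → ω ∈ A) :
    ENNReal.ofReal ((∑ k ∈ s, (n.choose k : ℝ)) * (1 / 2) ^ n) ≤ uniformBits n A := by
  set F := Finset.univ.filter fun ω : Fin n → Bool => onesCount ω ∈ s
  have hcard : (F.card : ℝ) = ∑ k ∈ s, (n.choose k : ℝ) := by
    have h := Finset.card_eq_sum_card_fiberwise (s := F) (t := s) (f := onesCount)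
      (fun ω hω => (Finset.mem_filter.mp hω).2)
    rw [h]
    push_cast
    refine Finset.sum_congr rfl fun k hk => ?_
    rw [← card_onesCount_eq n k, Finset.filter_filter]
    congr 2
    ext ω
    simp only [Finset.mem_filter, Finset.mem_univ, true_and]
    exact ⟨fun h => h.2, fun h => ⟨h ▸ hk, h⟩⟩
  have hF : uniformBits n (F : Set (Fin n → Bool)) =
      ENNReal.ofReal ((∑ k ∈ s, (n.choose k : ℝ)) * (1 / 2) ^ n) := by
    rw [← hcard, ← sum_measure_singleton]
    simp only [uniformBits_singleton, Finset.sum_const, nsmul_eq_mul]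
    rw [ENNReal.ofReal_mul (by positivity), ENNReal.ofReal_natCast]
  rw [← hF]
  exact measure_mono fun ω hω => hA ω (Finset.mem_filter.mp hω).2

lemma sixteen_pow_le_centralBinom_sq {m : ℕ} (hm : 1 ≤ m) :
    (16 : ℝ) ^ m ≤ 4 * m * (m.centralBinom : ℝ) ^ 2 := by
  induction m, hm using Nat.le_induction with
  | base => norm_num [Nat.centralBinom, Nat.choose]
  | succ m hm ih =>
    have h : ((m : ℝ) + 1) * ((m + 1).centralBinom : ℝ) = 2 * (2 * m + 1) * m.centralBinom := by
      exact_mod_cast Nat.succ_mul_centralBinom_succ m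
    push_cast
    have hm0 : (0 : ℝ) < m + 1 := by positivity
    have h2 : ((m : ℝ) + 1) ^ 2 * ((m + 1).centralBinom : ℝ) ^ 2 =
        4 * (2 * m + 1) ^ 2 * (m.centralBinom : ℝ) ^ 2 := by
      rw [← mul_pow, h]; ring
    refine le_of_mul_le_mul_left ?_ hm0
    calc ((m : ℝ) + 1) * 16 ^ (m + 1) = 16 * (m + 1) * 16 ^ m := by ring
      _ ≤ 16 * (m + 1) * (4 * m * (m.centralBinom : ℝ) ^ 2) := by gcongr
      _ ≤ 16 * ((2 * m + 1) ^ 2 * (m.centralBinom : ℝ) ^ 2) := by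
        nlinarith [sq_nonneg (m.centralBinom : ℝ)]
      _ = (m + 1) * (4 * (m + 1) * ((m + 1).centralBinom : ℝ) ^ 2) := by
        linear_combination -4 * h2

/-- The middle binomial coefficient is at least `2 ^ n / (2 √⌈n/2⌉)`. -/
lemma two_pow_le_choose_middle {n : ℕ} (hn : 1 ≤ n) :
    (2 : ℝ) ^ n ≤ 2 * √(((n + 1) / 2 : ℕ) : ℝ) * n.choose ((n + 1) / 2) := by
  have central {m : ℕ} (hm : 1 ≤ m) : (2 : ℝ) ^ (2 * m) ≤ 2 * √(m : ℝ) * m.centralBinom := by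
    refine le_of_sq_le_sq ?_ (by positivity)
    rw [mul_pow, mul_pow, Real.sq_sqrt (by positivity), ← pow_mul,
      show 2 * m * 2 = 4 * m by ring, pow_mul]
    norm_num
    exact sixteen_pow_le_centralBinom_sq hm
  rcases Nat.even_or_odd' n with ⟨m, rfl | rfl⟩
  · rw [show (2 * m + 1) / 2 = m by omega]
    exact central (by omega)
  · rw [show (2 * m + 1 + 1) / 2 = m + 1 by omega]
    have h := central (m := m + 1) (by omega)
    have hc : (m + 1).centralBinom = 2 * (2 * m + 1).choose (m + 1) := by
      rw [Nat.centralBinom_eq_two_mul_choose, show 2 * (m + 1) = 2 * m + 1 + 1 by ring,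
        Nat.choose_succ_succ, ← Nat.choose_symm_half m]
      ring
    rw [hc] at h
    push_cast at h ⊢
    rw [show 2 * (m + 1) = 2 * m + 1 + 1 by ring, pow_succ] at h
    linarith

/-- Gaussian decay of binomial coefficients above the middle, as long as `D ≤ n - k + 1`. -/
lemma choose_middle_mul_exp_le {n : ℕ} {D : ℝ} (hD : 0 < D) {k : ℕ} (hk : (n + 1) / 2 ≤ k)
    (hkD : D ≤ n - k + 1) :
    (n.choose ((n + 1) / 2) : ℝ) * Real.exp (-((k - n / 2 : ℝ) ^ 2 / D)) ≤ n.choose k := by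
  induction k, hk using Nat.le_induction with
  | base =>
    refine mul_le_of_le_one_right (by positivity) (Real.exp_le_one_iff.mpr ?_)
    exact neg_nonpos.mpr (by positivity)
  | succ k hk ih =>
    push_cast at hkD ⊢
    have ih := ih (by linarith)
    have hkn : k < n := by
      have : (k : ℝ) < n := by linarith
      exact_mod_cast this
    have hrec : (n.choose (k + 1) : ℝ) * (k + 1) = n.choose k * (n - k) := by
      have := Nat.choose_succ_right_eq n k
      rw [← Nat.cast_sub hkn.le]
      exact_mod_cast this
    have hnk : (n : ℝ) ≤ 2 * k + 1 := by
      have : n ≤ 2 * k + 1 := by omega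
      exact_mod_cast this
    have hratio : ((k : ℝ) + 1) ≤ (n - k) * Real.exp ((2 * k + 1 - n) / D) := by
      have h1 := Real.add_one_le_exp ((2 * k + 1 - n : ℝ) / D)
      have h2 : (2 * k + 1 - n : ℝ) ≤ (n - k) * ((2 * k + 1 - n) / D) := by
        rw [mul_div_assoc', le_div_iff₀ hD, mul_comm]
        exact mul_le_mul_of_nonneg_right (by linarith) (by linarith)
      have h3 : (0 : ℝ) ≤ n - k := by linarith
      nlinarith
    have hexp : Real.exp (-((k - n / 2 : ℝ) ^ 2 / D)) =
        Real.exp (-((k + 1 - n / 2 : ℝ) ^ 2 / D)) * Real.exp ((2 * k + 1 - n) / D) := by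
      rw [← Real.exp_add]
      congr 1
      field_simp
      ring
    set E := Real.exp ((2 * k + 1 - n : ℝ) / D)
    set M := (n.choose ((n + 1) / 2) : ℝ) * Real.exp (-((k + 1 - n / 2 : ℝ) ^ 2 / D)) with hM
    rw [hexp, ← mul_assoc, ← hM] at ih
    have hM0 : 0 ≤ M := by positivity
    refine le_of_mul_le_mul_right ?_ (show (0 : ℝ) < k + 1 by positivity)
    calc M * (k + 1) ≤ M * ((n - k) * E) := by gcongr
      _ = M * E * (n - k) := by ring
      _ ≤ n.choose k * (n - k) := mul_le_mul_of_nonneg_right ih (by linarith)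
      _ = n.choose (k + 1) * (k + 1) := hrec.symm

lemma inv_sqrt_two_pi_le : 1 / √(2 * Real.pi) ≤ 2 / 5 := by
  rw [show (2 / 5 : ℝ) = 1 / (5 / 2) by norm_num]
  refine one_div_le_one_div_of_le (by norm_num) (Real.le_sqrt_of_sq_le ?_)
  linarith [Real.pi_gt_d2]

/-- For few bits, already the all-ones outcome is likely enough. -/
lemma exp_div_sqrt_le_half_pow {n : ℕ} (hn : n < 8) {t : ℝ} (ht0 : 0 ≤ t) :
    Real.exp (-4 * (t + 1) ^ 2) / √(2 * Real.pi) ≤ (1 / 2) ^ n := by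
  have hpow : (1 / 2 : ℝ) ^ 7 ≤ (1 / 2) ^ n :=
    pow_le_pow_of_le_one (by norm_num) (by norm_num) (by omega)
  have hexp : Real.exp (-4 * (t + 1) ^ 2) ≤ 1 / 53 := by
    calc Real.exp (-4 * (t + 1) ^ 2) ≤ Real.exp (-4) := by
          apply Real.exp_le_exp.mpr; nlinarith
      _ = (Real.exp 1 ^ 4)⁻¹ := by rw [← Real.exp_nat_mul, ← Real.exp_neg]; norm_num
      _ ≤ ((2.7 : ℝ) ^ 4)⁻¹ := by
          gcongr; linarith [Real.exp_one_gt_d9]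
      _ ≤ 1 / 53 := by norm_num
  rw [div_eq_mul_one_div]
  calc _ ≤ (1 / 53 : ℝ) * (2 / 5) :=
        mul_le_mul hexp inv_sqrt_two_pi_le (by positivity) (by positivity)
    _ ≤ (1 / 2) ^ 7 := by norm_num
    _ ≤ _ := hpow

/-- Each outcome within `√n/4 + 1` above the threshold has enough weight. -/
lemma choose_lower_bound {n : ℕ} (hn : 8 ≤ n) {t : ℝ} (ht0 : 0 ≤ t) (ht : t ≤ √n / 8) {k : ℕ}
    (hk : (n : ℝ) / 2 ≤ k) (hkt : (k : ℝ) - n / 2 ≤ (t + 1 / 4) * √n + 1) :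
    2 * Real.exp (-4 * (t + 1) ^ 2) ≤ √n * (n.choose k * (1 / 2) ^ n) := by
  have hn8 : (8 : ℝ) ≤ n := by exact_mod_cast hn
  have hs2 : √(n : ℝ) ^ 2 = n := Real.sq_sqrt (by positivity)
  set s := √(n : ℝ)
  have hs : 8 / 3 ≤ s := Real.le_sqrt_of_sq_le (by norm_num; linarith)
  have hk0 : (n + 1) / 2 ≤ k := by
    have : (n : ℝ) ≤ 2 * k := by linarith
    have : n ≤ 2 * k := by exact_mod_cast this
    omega
  have hD : (n : ℝ) / 4 ≤ n - k + 1 := by nlinarith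
  have hdecay := choose_middle_mul_exp_le (n := n) (D := n / 4) (by positivity) hk0 hD
  have hu : (k : ℝ) - n / 2 ≤ (t + 5 / 8) * s := by linarith
  have hu2 : (k - n / 2 : ℝ) ^ 2 / (n / 4) ≤ 4 * (t + 5 / 8) ^ 2 := by
    rw [div_le_iff₀ (by positivity)]
    calc (k - n / 2 : ℝ) ^ 2 ≤ ((t + 5 / 8) * s) ^ 2 := by
          gcongr
      _ = 4 * (t + 5 / 8) ^ 2 * (n / 4) := by rw [mul_pow, hs2]; ring
  have hexp : 3 * Real.exp (-4 * (t + 1) ^ 2) ≤ Real.exp (-((k - n / 2 : ℝ) ^ 2 / (n / 4))) := by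
    have h3 : (3 : ℝ) ≤ Real.exp (39 / 16) := by
      linarith [Real.add_one_le_exp (39 / 16 : ℝ)]
    calc 3 * Real.exp (-4 * (t + 1) ^ 2)
        ≤ Real.exp (39 / 16) * Real.exp (-4 * (t + 1) ^ 2) := by gcongr
      _ = Real.exp (39 / 16 + -4 * (t + 1) ^ 2) := (Real.exp_add _ _).symm
      _ ≤ _ := by apply Real.exp_le_exp.mpr; nlinarith
  have hmid := two_pow_le_choose_middle (n := n) (by omega)
  have hsq : √(((n + 1) / 2 : ℕ) : ℝ) ≤ 3 / 4 * s := by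
    rw [Real.sqrt_le_left (by positivity), mul_pow, hs2]
    have : (((n + 1) / 2 : ℕ) : ℝ) ≤ ((n + 1 : ℕ) : ℝ) / 2 := Nat.cast_div_le
    push_cast at this
    linarith
  have hmid' : (2 : ℝ) ^ n ≤ 3 / 2 * s * n.choose ((n + 1) / 2) := by
    refine hmid.trans (mul_le_mul_of_nonneg_right ?_ (by positivity))
    linarith
  rw [one_div_pow, ← mul_assoc, mul_one_div, le_div_iff₀ (by positivity)]
  calc 2 * Real.exp (-4 * (t + 1) ^ 2) * 2 ^ n
      ≤ 2 * Real.exp (-4 * (t + 1) ^ 2) * (3 / 2 * s * n.choose ((n + 1) / 2)) := by gcongr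
    _ = s * (n.choose ((n + 1) / 2) * (3 * Real.exp (-4 * (t + 1) ^ 2))) := by ring
    _ ≤ s * (n.choose ((n + 1) / 2) * Real.exp (-((k - n / 2 : ℝ) ^ 2 / (n / 4)))) := by gcongr
    _ ≤ s * n.choose k := by gcongr

/-- Anti-concentration for `Binomial(n, 1/2)`: for `0 ≤ t ≤ √n / 8`, the number
of ones among `n` independent uniform bits exceeds its mean `n/2` by at least
`t·√n` with probability at least `e^{-4(t+1)²}/√(2π)`. -/
theorem statement8 (n : ℕ) (hn : 0 < n) (t : ℝ) (ht0 : 0 ≤ t)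
    (ht : t ≤ Real.sqrt n / 8) :
    ENNReal.ofReal (Real.exp (-4 * (t + 1) ^ 2) / Real.sqrt (2 * Real.pi)) ≤
      uniformBits n {ω | t * Real.sqrt n ≤ (onesCount ω : ℝ) - (n : ℝ) / 2} := by
  have hs2 : √(n : ℝ) ^ 2 = n := Real.sq_sqrt (by positivity)
  have hs : 0 < √(n : ℝ) := Real.sqrt_pos.mpr (by exact_mod_cast hn)
  rcases lt_or_ge n 8 with h8 | h8
  · refine le_trans (ENNReal.ofReal_le_ofReal ?_) (sum_choose_le_uniformBits n {n} _ ?_)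
    · simpa using exp_div_sqrt_le_half_pow h8 ht0
    · intro ω hω
      rw [Set.mem_ofPred_eq, Finset.mem_singleton.mp hω]
      nlinarith
  set K := ⌈(n : ℝ) / 2 + t * √n⌉₊
  set L := ⌈√(n : ℝ) / 4⌉₊
  have hK : (n : ℝ) / 2 + t * √n ≤ K := Nat.le_ceil _
  have hK' : (K : ℝ) < n / 2 + t * √n + 1 := Nat.ceil_lt_add_one (by positivity)
  have hL : √(n : ℝ) / 4 ≤ L := Nat.le_ceil _
  have hL' : (L : ℝ) < √n / 4 + 1 := Nat.ceil_lt_add_one (by positivity)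
  refine le_trans (ENNReal.ofReal_le_ofReal ?_)
    (sum_choose_le_uniformBits n (Finset.Ico K (K + L)) _ ?_)
  · have hterm : ∀ k ∈ Finset.Ico K (K + L),
        2 * Real.exp (-4 * (t + 1) ^ 2) / √n ≤ n.choose k * (1 / 2) ^ n := by
      intro k hk
      obtain ⟨h1, h2⟩ := Finset.mem_Ico.mp hk
      have h1' : (K : ℝ) ≤ k := by exact_mod_cast h1
      have h2' : (k : ℝ) + 1 ≤ K + L := by exact_mod_cast h2
      rw [div_le_iff₀' hs]
      exact choose_lower_bound h8 ht0 ht (by nlinarith) (by nlinarith)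
    have hsum := Finset.card_nsmul_le_sum _ _ _ hterm
    rw [Nat.card_Ico, Nat.add_sub_cancel_left, nsmul_eq_mul, ← Finset.sum_mul] at hsum
    refine le_trans ?_ hsum
    calc Real.exp (-4 * (t + 1) ^ 2) / √(2 * Real.pi)
        ≤ Real.exp (-4 * (t + 1) ^ 2) * (1 / 2) := by
          rw [div_eq_mul_one_div]
          exact mul_le_mul_of_nonneg_left (by linarith [inv_sqrt_two_pi_le]) (by positivity)
      _ = √n / 4 * (2 * Real.exp (-4 * (t + 1) ^ 2) / √n) := by
          field_simp
          norm_num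
      _ ≤ L * (2 * Real.exp (-4 * (t + 1) ^ 2) / √n) := by gcongr
  · intro ω hω
    have h : (K : ℝ) ≤ onesCount ω := by exact_mod_cast (Finset.mem_Ico.mp hω).1
    rw [Set.mem_ofPred_eq]
    linarith
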